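/- Let J(x) = x·tanh x, J'(ξ) = tanh ξ + ξ(1 − tanh²ξ), Λ(ξ) = J'(ξ)² − 4J(ξ), and for ξ ≠ 0, η ≠ 0, ξ+η ≠ 0 set ζ = −(ξ+η), Ω = J(ξ)² + J(η)² + J(ζ)² − 2J(ξ)J(η) − 2J(η)J(ζ) − 2J(ζ)J(ξ) and A^h(ξ,η) = 2iη·J(ξ)·(J(ζ) − J(ξ) + J(η))/Ω. Then: (a) for every fixed real ξ ≠ 0, as η → 0 through values with η ≠ 0 and ξ + η ≠ 0, A^h(ξ,η) → 2i·J(ξ)·J'(ξ)/Λ(ξ); and (b) for every fixed real η ≠ 0, as ξ → 0 through values with ξ ≠ 0 and ξ + η ≠ 0, A^h(ξ,η) → 4iη·J(η)/Λ(η). -/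

import Mathlib

open Filter Topology

noncomputable def J (x : ℝ) : ℝ := x * Real.tanh x

noncomputable def J' (ξ : ℝ) : ℝ := Real.tanh ξ + ξ * (1 - Real.tanh ξ ^ 2)

noncomputable def Λ (ξ : ℝ) : ℝ := J' ξ ^ 2 - 4 * J ξ

noncomputable def Ω (ξ η ζ : ℝ) : ℝ :=
  J ξ ^ 2 + J η ^ 2 + J ζ ^ 2 - 2 * J ξ * J η - 2 * J η * J ζ - 2 * J ζ * J ξ

noncomputable def Ah (ξ η : ℝ) : ℂ :=
  2 * Complex.I * (η : ℂ) * (J ξ : ℂ) * ((J (-(ξ + η)) - J ξ + J η : ℝ) : ℂ) /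
    ((Ω ξ η (-(ξ + η)) : ℝ) : ℂ)

lemma hasDerivAt_tanh_aux (x : ℝ) : HasDerivAt Real.tanh (1 - Real.tanh x ^ 2) x := by
  have hc := (Real.cosh_pos x).ne'
  have h := (Real.hasDerivAt_sinh x).div (Real.hasDerivAt_cosh x) hc
  have e : Real.tanh = Real.sinh / Real.cosh := by
    funext y
    exact Real.tanh_eq_sinh_div_cosh y
  rw [e]
  refine h.congr_deriv ?_
  simp only [Pi.div_apply]
  field_simp

lemma hasDerivAt_J_aux (x : ℝ) : HasDerivAt J (J' x) x := by
  have h := (hasDerivAt_id x).mul (hasDerivAt_tanh_aux x)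
  exact h.congr_deriv (by simp [J'])

lemma J_neg_aux (x : ℝ) : J (-x) = J x := by
  simp [J, Real.tanh_neg]

lemma sinh_lt_mul_cosh_aux (a : ℝ) (ha : 0 < a) : Real.sinh a < a * Real.cosh a := by
  have hd : ∀ x : ℝ, HasDerivAt (fun y : ℝ => y * Real.cosh y - Real.sinh y)
      (x * Real.sinh x) x := by
    intro x
    have h := ((hasDerivAt_id x).mul (Real.hasDerivAt_cosh x)).sub (Real.hasDerivAt_sinh x)
    exact h.congr_deriv (by simp)
  have hm : StrictMonoOn (fun y : ℝ => y * Real.cosh y - Real.sinh y) (Set.Ici 0) := by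
    apply strictMonoOn_of_deriv_pos (convex_Ici 0)
    · exact fun x _ => (hd x).continuousAt.continuousWithinAt
    · intro x hx
      rw [interior_Ici] at hx
      rw [(hd x).deriv]
      exact mul_pos hx (Real.sinh_pos_iff.2 hx)
  have := hm (Set.self_mem_Ici) (Set.mem_Ici.2 ha.le) ha
  simp at this
  linarith

lemma Λ_neg_of_pos_aux (x : ℝ) (hx : 0 < x) : Λ x < 0 := by
  have hc := Real.cosh_pos x
  have hA := Real.self_lt_sinh_iff.2 (show 0 < 2 * x by linarith)
  have hB := sinh_lt_mul_cosh_aux (2 * x) (by linarith)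
  have hcs := Real.cosh_sq x
  rw [Real.cosh_two_mul] at hB
  rw [Real.sinh_two_mul] at hA hB
  have e : Λ x = ((Real.sinh x * Real.cosh x + x) ^ 2
      - 4 * x * (Real.sinh x * Real.cosh x) * Real.cosh x ^ 2) / Real.cosh x ^ 4 := by
    have e1 : J' x = (Real.sinh x * Real.cosh x + x) / Real.cosh x ^ 2 := by
      rw [J', Real.tanh_eq_sinh_div_cosh]
      field_simp
      rw [hcs]; ring
    rw [Λ, e1, J, Real.tanh_eq_sinh_div_cosh]
    field_simp
  rw [e]
  apply div_neg_of_neg_of_pos _ (by positivity)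
  generalize Real.cosh x = c at *
  generalize Real.sinh x = s at *
  have hp : x < s * c := by linarith
  have hq : s * c + x < 2 * x * c ^ 2 := by nlinarith
  have h0 : 0 < s * c := by linarith
  nlinarith [mul_lt_mul_of_pos_left hq h0]

lemma Λ_neg_aux (x : ℝ) (hx : x ≠ 0) : Λ x < 0 := by
  rcases lt_or_gt_of_ne hx with h | h
  · have := Λ_neg_of_pos_aux (-x) (by linarith)
    have e : Λ (-x) = Λ x := by
      simp only [Λ, J_neg_aux, J', Real.tanh_neg]
      ring
    rwa [e] at this
  · exact Λ_neg_of_pos_aux x h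

lemma J_div_aux : Tendsto (fun h : ℝ => J h / h ^ 2) (𝓝[≠] 0) (𝓝 1) := by
  have h := (hasDerivAt_tanh_aux 0).tendsto_slope_zero
  simp only [Real.tanh_zero, zero_add, sub_zero, smul_eq_mul] at h
  have h2 : Tendsto (fun t : ℝ => t⁻¹ * Real.tanh t) (𝓝[≠] 0) (𝓝 1) := by simpa using h
  refine h2.congr' ?_
  filter_upwards [self_mem_nhdsWithin] with t ht
  have : t ≠ 0 := ht
  rw [J]
  field_simp

lemma J_zero_aux : Tendsto J (𝓝[≠] 0) (𝓝 0) := by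
  have h := (hasDerivAt_J_aux 0).continuousAt.tendsto
  have e : J 0 = 0 := by simp [J]
  rw [e] at h
  exact h.mono_left nhdsWithin_le_nhds

lemma J_shift_aux (x : ℝ) : Tendsto (fun h : ℝ => J (x + h)) (𝓝[≠] 0) (𝓝 (J x)) := by
  have h : ContinuousAt J (x + 0) := (hasDerivAt_J_aux (x + 0)).continuousAt
  have h2 : ContinuousAt (fun h : ℝ => J (x + h)) 0 :=
    ContinuousAt.comp (f := fun h : ℝ => x + h) h (by fun_prop)
  have h3 := h2.tendsto
  simp only [add_zero] at h3
  exact h3.mono_left nhdsWithin_le_nhds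

lemma J_slope_aux (x : ℝ) :
    Tendsto (fun h : ℝ => (J (x + h) - J x) / h) (𝓝[≠] 0) (𝓝 (J' x)) := by
  have h := (hasDerivAt_J_aux x).tendsto_slope_zero
  refine h.congr fun t => ?_
  rw [smul_eq_mul]; ring

/-- The rescaled denominator tends to `Λ`. -/
lemma Ω_lim_aux (x : ℝ) :
    Tendsto (fun h : ℝ => Ω x h (-(x + h)) / h ^ 2) (𝓝[≠] 0) (𝓝 (Λ x)) := by
  have h1 := ((J_slope_aux x).pow 2).add ((J_div_aux.mul J_zero_aux).sub
    ((J_div_aux.const_mul 2).mul ((J_shift_aux x).add_const (J x))))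
  have e : J' x ^ 2 + (1 * 0 - 2 * 1 * (J x + J x)) = Λ x := by rw [Λ]; ring
  rw [e] at h1
  refine h1.congr' ?_
  filter_upwards [self_mem_nhdsWithin] with t ht
  have : t ≠ 0 := ht
  rw [Ω, J_neg_aux]
  field_simp
  ring

lemma Ah_real_aux (ξ η : ℝ) : Ah ξ η =
    2 * Complex.I * ((η * J ξ * (J (ξ + η) - J ξ + J η) / Ω ξ η (-(ξ + η)) : ℝ) : ℂ) := by
  rw [Ah, J_neg_aux]
  push_cast
  ring

/-- Boundary values of the holomorphic normal-form symbol `A^h` on the lines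
`η = 0` and `ξ = 0`. -/
theorem Ah_limits :
    (∀ ξ : ℝ, ξ ≠ 0 →
      Tendsto (fun η : ℝ => Ah ξ η) (𝓝[{η : ℝ | η ≠ 0 ∧ ξ + η ≠ 0}] (0 : ℝ))
        (𝓝 (2 * Complex.I * (J ξ : ℂ) * (J' ξ : ℂ) / ((Λ ξ : ℝ) : ℂ)))) ∧
    (∀ η : ℝ, η ≠ 0 →
      Tendsto (fun ξ : ℝ => Ah ξ η) (𝓝[{ξ : ℝ | ξ ≠ 0 ∧ ξ + η ≠ 0}] (0 : ℝ))
        (𝓝 (4 * Complex.I * (η : ℂ) * (J η : ℂ) / ((Λ η : ℝ) : ℂ)))) := by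
  constructor
  · intro x hx
    have hJ : Tendsto (fun h : ℝ => J h / h) (𝓝[≠] 0) (𝓝 0) := by
      have h := J_slope_aux 0
      simpa [J, J'] using h
    have hr := (((J_slope_aux x).add hJ).const_mul (J x)).div (Ω_lim_aux x) (Λ_neg_aux x hx).ne
    have hr2 : Tendsto (fun h : ℝ => h * J x * (J (x + h) - J x + J h) / Ω x h (-(x + h)))
        (𝓝[≠] 0) (𝓝 (J x * (J' x + 0) / Λ x)) := by
      refine hr.congr' ?_
      filter_upwards [self_mem_nhdsWithin] with t ht
      have : t ≠ 0 := ht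
      simp only [Pi.div_apply]
      rw [← add_div, div_div_eq_mul_div]
      congr 1
      field_simp
    have hc := ((Complex.continuous_ofReal.tendsto _).comp hr2).const_mul (2 * Complex.I)
    have hc2 := hc.mono_left (nhdsWithin_mono 0
      (show {η : ℝ | η ≠ 0 ∧ x + η ≠ 0} ⊆ {0}ᶜ from fun t ht => ht.1))
    convert hc2 using 1
    · funext t
      exact Ah_real_aux x t
    · congr 1
      push_cast
      ring
  · intro x hx
    have hr := (((J_div_aux.const_mul x).mul (((J_shift_aux x).sub J_zero_aux).add_const
      (J x)))).div (Ω_lim_aux x) (Λ_neg_aux x hx).ne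
    have hr2 : Tendsto (fun h : ℝ => x * J h * (J (h + x) - J h + J x) / Ω h x (-(h + x)))
        (𝓝[≠] 0) (𝓝 (x * 1 * (J x - 0 + J x) / Λ x)) := by
      refine hr.congr' ?_
      filter_upwards [self_mem_nhdsWithin] with t ht
      have : t ≠ 0 := ht
      have e : Ω t x (-(t + x)) = Ω x t (-(x + t)) := by
        rw [add_comm t x, Ω, Ω]; ring
      simp only [Pi.div_apply]
      rw [e, add_comm t x, div_div_eq_mul_div]
      congr 1
      field_simp
    have hc := ((Complex.continuous_ofReal.tendsto _).comp hr2).const_mul (2 * Complex.I)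
    have hc2 := hc.mono_left (nhdsWithin_mono 0
      (show {ξ : ℝ | ξ ≠ 0 ∧ ξ + x ≠ 0} ⊆ {0}ᶜ from fun t ht => ht.1))
    convert hc2 using 1
    · funext t
      exact Ah_real_aux t x
    · congr 1
      push_cast
      ring
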